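/- arXiv:1110.4059 — 2 statements merged into one kernel-verified Lean document; each statement's English description precedes it below -/
import Mathlib

section
/- Let n ≥ 0 and let v_0, …, v_{n+2} ∈ ℝ² with v_i = (p(a + i·b), q(a + i·b)), where p, q ∈ ℝ[t] are polynomials of degree at most 2 such that {p, q, 1} are linearly independent in ℝ[t], and a, b ∈ ℝ with b ≠ 0. Let f_i := e_0 + e_1 + ⋯ + e_i ∈ ℝ^{n+3} (partial sums of the standard basis vectors). Then for any two triangulations T and T′ of the point configuration {v_0, …, v_{n+2}}, the GKZ vectors have equal Euclidean norm: ‖GKZ(T)‖ = ‖GKZ(T′)‖. In particular, all vertices of the secondary polytope conv{GKZ(T) : T a triangulation} lie on a common sphere centered at the origin. -/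
open MeasureTheory

/-- Area (2-dimensional Lebesgue measure) of the convex hull of the points
indexed by `σ`. -/
noncomputable def triArea {m : ℕ} (v : Fin m → ℝ × ℝ) (σ : Finset (Fin m)) : ℝ :=
  (volume (convexHull ℝ (v '' ↑σ))).toReal

/-- `T` is a triangulation of the planar point configuration `v`:
a finite set of affinely independent triples whose convex hulls cover the
convex hull of the configuration, any two of which meet in a common
(extreme) face of each. -/
def IsTriangulation {m : ℕ} (v : Fin m → ℝ × ℝ) (T : Finset (Finset (Fin m))) : Prop :=
  (∀ σ ∈ T, σ.card = 3 ∧ AffineIndependent ℝ (fun i : {x // x ∈ σ} => v i.1)) ∧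
  (⋃ σ ∈ T, convexHull ℝ (v '' ↑σ)) = convexHull ℝ (Set.range v) ∧
  ∀ σ ∈ T, ∀ τ ∈ T,
    IsExtreme ℝ (convexHull ℝ (v '' ↑σ)) (convexHull ℝ (v '' ↑σ) ∩ convexHull ℝ (v '' ↑τ)) ∧
    IsExtreme ℝ (convexHull ℝ (v '' ↑τ)) (convexHull ℝ (v '' ↑σ) ∩ convexHull ℝ (v '' ↑τ))

/-- The GKZ vector of a triangulation `T` with respect to the vectors `f i`:
`GKZ(T) = ∑ i (∑ {σ ∈ T : i ∈ σ} vol σ) • f i`. -/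
noncomputable def GKZ {m : ℕ} {E : Type*} [AddCommGroup E] [Module ℝ E]
    (v : Fin m → ℝ × ℝ) (f : Fin m → E) (T : Finset (Finset (Fin m))) : E :=
  ∑ i, (∑ σ ∈ T.filter (fun σ => i ∈ σ), triArea v σ) • f i

/-!
The points lie in convex position on a parabola, so a triangulation is built recursively from the
triangle on a side `ik` of a polygon with vertices `i, …, k`, which leaves the polygons `i, …, j`
and `j, …, k`. A triangle `ijk` has area `C (j - i) (k - i) (k - j)`, whence the GKZ weights of a
subpolygon have a total and a first moment that depend only on `i` and `k`.

Since `⟪f i, f j⟫ = 1 + min i j` is affine in `j` on either side of `i`, the inner product of the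
GKZ vector of a subpolygon with `f s`, for `s` not strictly between its end points, and with the
GKZ vector of the adjacent subpolygon, is determined by these two quantities. Hence the squared
norm obeys the same recursion for every triangulation, and a polynomial in `i` and `k` solves it,
whatever the choices of `j`.
-/

section PolygonTriangulation

variable {ι : Type*} [LinearOrder ι]

/-- `IsPolygonTriangulation i k S`: the family `S` of triples triangulates the convex polygon whose
vertices, in cyclic order, are the elements of the interval `[i, k]`. Such a polygon is split along
the triangle on its side `ik`; a segment, or a single point, needs no triangle. -/
inductive IsPolygonTriangulation : ι → ι → Finset (Finset ι) → Prop
  | edge {i k : ι} : i ⩿ k → IsPolygonTriangulation i k ∅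
  | glue {i j k : ι} {S S' : Finset (Finset ι)} : i < j → j < k →
      IsPolygonTriangulation i j S → IsPolygonTriangulation j k S' →
      IsPolygonTriangulation i k (insert {i, j, k} (S ∪ S'))

theorem sum_triple {M : Type*} [AddCommMonoid M] {i j k : ι} (hij : i < j) (hjk : j < k)
    (F : ι → M) : ∑ r ∈ ({i, j, k} : Finset ι), F r = F i + (F j + F k) := by
  rw [Finset.sum_insert (by simp [hij.ne, (hij.trans hjk).ne]), Finset.sum_pair hjk.ne]

theorem card_triple {i j k : ι} (hij : i < j) (hjk : j < k) :
    ({i, j, k} : Finset ι).card = 3 :=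
  Finset.card_eq_three.2 ⟨i, j, k, hij.ne, (hij.trans hjk).ne, hjk.ne, rfl⟩

namespace IsPolygonTriangulation

variable {i j k : ι} {S S' : Finset (Finset ι)}

theorem subset_Icc (h : IsPolygonTriangulation i k S) {σ : Finset ι} (hσ : σ ∈ S) :
    (σ : Set ι) ⊆ Set.Icc i k := by
  induction h with
  | edge => simp at hσ
  | @glue i j k S S' hij hjk _ _ ih ih' =>
    rcases Finset.mem_insert.1 hσ with rfl | hσ
    · simp [Set.insert_subset_iff, hij.le, hjk.le, (hij.trans hjk).le]
    · rcases Finset.mem_union.1 hσ with hσ | hσ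
      · exact (ih hσ).trans (Set.Icc_subset_Icc_right hjk.le)
      · exact (ih' hσ).trans (Set.Icc_subset_Icc_left hij.le)

theorem card_eq_three (h : IsPolygonTriangulation i k S) {σ : Finset ι} (hσ : σ ∈ S) :
    σ.card = 3 := by
  induction h with
  | edge => simp at hσ
  | glue hij hjk _ _ ih ih' =>
    rcases Finset.mem_insert.1 hσ with rfl | hσ
    · exact card_triple hij hjk
    · exact (Finset.mem_union.1 hσ).elim ih ih'

theorem disjoint (h : IsPolygonTriangulation i j S) (h' : IsPolygonTriangulation j k S') :
    Disjoint S S' := by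
  refine Finset.disjoint_left.2 fun σ hσ hσ' ↦ ?_
  have hsub : σ ⊆ {j} := fun r hr ↦
    Finset.mem_singleton.2 (le_antisymm (h.subset_Icc hσ hr).2 (h'.subset_Icc hσ' hr).1)
  have hcard := Finset.card_le_card hsub
  rw [h.card_eq_three hσ, Finset.card_singleton] at hcard
  omega

theorem triple_notMem_union (hij : i < j) (hjk : j < k) (h : IsPolygonTriangulation i j S)
    (h' : IsPolygonTriangulation j k S') : {i, j, k} ∉ S ∪ S' := by
  intro hmem
  rcases Finset.mem_union.1 hmem with hσ | hσ
  · exact hjk.not_ge (h.subset_Icc hσ (by simp : k ∈ _)).2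
  · exact hij.not_ge (h'.subset_Icc hσ (by simp : i ∈ _)).1

theorem sum_glue {M : Type*} [AddCommMonoid M] (hij : i < j) (hjk : j < k)
    (h : IsPolygonTriangulation i j S) (h' : IsPolygonTriangulation j k S')
    (F : Finset ι → M) :
    ∑ σ ∈ insert {i, j, k} (S ∪ S'), F σ = F {i, j, k} + (∑ σ ∈ S, F σ + ∑ σ ∈ S', F σ) := by
  rw [Finset.sum_insert (triple_notMem_union hij hjk h h'), Finset.sum_union (h.disjoint h')]

end IsPolygonTriangulation

/-- No edge of a member of `T` crosses an edge of a member of `T`, when the index set is placed in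
order on a convex curve. -/
def IsNonCrossing (T : Finset (Finset ι)) : Prop :=
  ∀ ⦃σ⦄, σ ∈ T → ∀ ⦃τ⦄, τ ∈ T → ∀ ⦃a b c d⦄, a ∈ σ → c ∈ σ → b ∈ τ → d ∈ τ →
    a < b → b < c → ¬ c < d

variable [LocallyFiniteOrder ι]

/-- The members of `T` that lie in the polygon with vertex set `[i, k]`. -/
def trianglesBetween (T : Finset (Finset ι)) (i k : ι) : Finset (Finset ι) :=
  T.filter (· ⊆ Finset.Icc i k)

theorem trianglesBetween_eq_empty_of_wcovBy {T : Finset (Finset ι)} (h3 : ∀ σ ∈ T, σ.card = 3)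
    {i k : ι} (hik : i ⩿ k) : trianglesBetween T i k = ∅ := by
  refine Finset.filter_eq_empty_iff.2 fun σ hσ hsub ↦ ?_
  have hpair : σ ⊆ {i, k} := fun r hr ↦ by
    obtain ⟨hir, hrk⟩ := Finset.mem_Icc.1 (hsub hr)
    simpa [eq_comm] using hik.eq_or_eq hir hrk
  have := (Finset.card_le_card hpair).trans Finset.card_le_two
  have := h3 σ hσ
  omega

theorem IsNonCrossing.subset_Icc_or_subset_Icc {T : Finset (Finset ι)} (hT : IsNonCrossing T)
    (h3 : ∀ σ ∈ T, σ.card = 3) {i j k : ι} (hij : i < j) (hjk : j < k) (hijk : {i, j, k} ∈ T)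
    {σ : Finset ι} (hσ : σ ∈ T) (hne : σ ≠ {i, j, k}) (hsub : σ ⊆ Finset.Icc i k) :
    σ ⊆ Finset.Icc i j ∨ σ ⊆ Finset.Icc j k := by
  by_contra! hcon
  have hbd : ∀ r ∈ σ, i ≤ r ∧ r ≤ k := fun r hr ↦ Finset.mem_Icc.1 (hsub hr)
  obtain ⟨z, hz, hjz⟩ : ∃ z ∈ σ, j < z := by
    by_contra! hle
    exact hcon.1 fun r hr ↦ Finset.mem_Icc.2 ⟨(hbd r hr).1, hle r hr⟩
  obtain ⟨x, hx, hxj⟩ : ∃ x ∈ σ, x < j := by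
    by_contra! hle
    exact hcon.2 fun r hr ↦ Finset.mem_Icc.2 ⟨hle r hr, (hbd r hr).2⟩
  have eq_left : ∀ y ∈ σ, y < j → y = i := fun y hy hyj ↦
    ((hbd y hy).1.eq_of_not_lt fun hiy ↦
      hT hijk hσ (by simp : i ∈ _) (by simp : j ∈ _) hy hz hiy hyj hjz).symm
  have eq_right : ∀ y ∈ σ, j < y → y = k := fun y hy hjy ↦
    (hbd y hy).2.eq_of_not_lt fun hyk ↦
      hT hσ hijk hx hy (by simp : j ∈ _) (by simp : k ∈ _) hxj hjy hyk
  refine hne (Finset.eq_of_subset_of_card_le (fun y hy ↦ ?_) (by rw [h3 _ hσ, h3 _ hijk]))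
  rcases lt_trichotomy y j with h | rfl | h
  · simp [eq_left y hy h]
  · simp
  · simp [eq_right y hy h]

theorem IsNonCrossing.trianglesBetween_eq {T : Finset (Finset ι)} (hT : IsNonCrossing T)
    (h3 : ∀ σ ∈ T, σ.card = 3) {i j k : ι} (hij : i < j) (hjk : j < k) (hijk : {i, j, k} ∈ T) :
    trianglesBetween T i k =
      insert {i, j, k} (trianglesBetween T i j ∪ trianglesBetween T j k) := by
  ext σ
  simp only [trianglesBetween, Finset.mem_insert, Finset.mem_union, Finset.mem_filter]
  constructor
  · rintro ⟨hσ, hsub⟩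
    by_cases hne : σ = {i, j, k}
    · exact Or.inl hne
    · exact Or.inr ((hT.subset_Icc_or_subset_Icc h3 hij hjk hijk hσ hne hsub).imp
        (⟨hσ, ·⟩) (⟨hσ, ·⟩))
  · rintro (rfl | ⟨hσ, hsub⟩ | ⟨hσ, hsub⟩)
    · exact ⟨hijk, by simp [Finset.insert_subset_iff, hij.le, hjk.le, (hij.trans hjk).le]⟩
    · exact ⟨hσ, hsub.trans (Finset.Icc_subset_Icc_right hjk.le)⟩
    · exact ⟨hσ, hsub.trans (Finset.Icc_subset_Icc_left hij.le)⟩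

/-- Think of `side i k` as saying that `ik` is a side of a triangle or of the whole polygon: only
along such pairs does the recursion cut, and only on those does a triangle have to sit. -/
theorem IsNonCrossing.isPolygonTriangulation {T : Finset (Finset ι)} (hT : IsNonCrossing T)
    (h3 : ∀ σ ∈ T, σ.card = 3) {side : ι → ι → Prop}
    (side_of_mem : ∀ σ ∈ T, ∀ i ∈ σ, ∀ k ∈ σ, side i k)
    (exists_triple : ∀ i k, side i k → i < k → ¬ i ⋖ k → ∃ j, i < j ∧ j < k ∧ {i, j, k} ∈ T)
    (i k : ι) (hik : i ≤ k) (hside : side i k) :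
    IsPolygonTriangulation i k (trianglesBetween T i k) := by
  induction hn : (Finset.Icc i k).card using Nat.strong_induction_on generalizing i k with
  | _ n ih =>
  subst hn
  by_cases hcov : i ⩿ k
  · rw [trianglesBetween_eq_empty_of_wcovBy h3 hcov]
    exact .edge hcov
  have hlt : i < k := hik.lt_of_ne fun h ↦ hcov (h ▸ WCovBy.refl i)
  obtain ⟨j, hij, hjk, hijk⟩ := exists_triple i k hside hlt fun h ↦ hcov h.wcovBy
  rw [hT.trianglesBetween_eq h3 hij hjk hijk]
  exact .glue hij hjk
    (ih _ (Finset.card_lt_card (Finset.Icc_ssubset_Icc_right hik le_rfl hjk)) i j hij.le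
      (side_of_mem _ hijk i (by simp) j (by simp)) rfl)
    (ih _ (Finset.card_lt_card (Finset.Icc_ssubset_Icc_left hik hij le_rfl)) j k hjk.le
      (side_of_mem _ hijk j (by simp) k (by simp)) rfl)

end PolygonTriangulation

section GKZVector

open scoped InnerProductSpace

variable {m : ℕ} {E : Type*} {v : Fin m → ℝ × ℝ}

theorem GKZ_eq_sum_triArea_smul [AddCommGroup E] [Module ℝ E] (v : Fin m → ℝ × ℝ) (f : Fin m → E)
    (T : Finset (Finset (Fin m))) : GKZ v f T = ∑ σ ∈ T, triArea v σ • ∑ r ∈ σ, f r := by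
  simp only [GKZ, Finset.sum_smul, Finset.smul_sum]
  exact Finset.sum_comm' (by simp [and_comm])

theorem GKZ_congr [AddCommGroup E] [Module ℝ E] {f g : Fin m → E} {T : Finset (Finset (Fin m))}
    (h : ∀ σ ∈ T, ∀ r ∈ σ, f r = g r) : GKZ v f T = GKZ v g T := by
  simp only [GKZ_eq_sum_triArea_smul]
  exact Finset.sum_congr rfl fun σ hσ ↦ by rw [Finset.sum_congr rfl (h σ hσ)]

theorem inner_GKZ_right [NormedAddCommGroup E] [InnerProductSpace ℝ E] (x : E) (f : Fin m → E)
    (T : Finset (Finset (Fin m))) : ⟪x, GKZ v f T⟫_ℝ = GKZ v (fun r ↦ ⟪x, f r⟫_ℝ) T := by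
  simp only [GKZ, inner_sum, real_inner_smul_right, smul_eq_mul]

theorem IsPolygonTriangulation.GKZ_glue [AddCommGroup E] [Module ℝ E] {i j k : Fin m}
    {S S' : Finset (Finset (Fin m))} (hij : i < j) (hjk : j < k)
    (h : IsPolygonTriangulation i j S) (h' : IsPolygonTriangulation j k S') (f : Fin m → E) :
    GKZ v f (insert {i, j, k} (S ∪ S')) =
      triArea v {i, j, k} • (f i + (f j + f k)) + (GKZ v f S + GKZ v f S') := by
  simp only [GKZ_eq_sum_triArea_smul, h.sum_glue hij hjk h', sum_triple hij hjk]

theorem cast_sub_cast_eq_zero_or_one_of_wcovBy {i k : Fin m} (h : i ⩿ k) :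
    ((k : ℕ) : ℝ) - (i : ℕ) = 0 ∨ ((k : ℕ) : ℝ) - (i : ℕ) = 1 := by
  rcases h.eq_or_covBy with rfl | h
  · simp
  · right
    rw [← Nat.covBy_iff_add_one_eq.1 (Fin.covBy_iff.1 h)]
    simp

namespace IsPolygonTriangulation

variable {C : ℝ} {i j k : Fin m} {S S' : Finset (Finset (Fin m))}
  (hC : ∀ i j k : Fin m, i < j → j < k → triArea v {i, j, k} =
    C * (((j : ℝ) - i) * ((k : ℝ) - i) * ((k : ℝ) - j)))

include hC

/-- The coordinate sum (`c₀ = 1`, `c₁ = 0`) and the first moment (`c₀ = 0`, `c₁ = 1`) of the GKZ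
weights do not depend on the triangulation. -/
theorem GKZ_affine (h : IsPolygonTriangulation i k S) (c₀ c₁ : ℝ) :
    GKZ v (fun r ↦ c₀ + c₁ * (r : ℝ)) S =
      C * (((k : ℝ) - i) ^ 3 - ((k : ℝ) - i)) * (c₀ + c₁ * ((i : ℝ) + k) / 2) := by
  induction h with
  | edge hik => rcases cast_sub_cast_eq_zero_or_one_of_wcovBy hik with h | h <;> simp [GKZ, h]
  | glue hij hjk h h' ih ih' =>
    rw [h.GKZ_glue hij hjk h', ih, ih', hC _ _ _ hij hjk, smul_eq_mul]
    ring

variable [NormedAddCommGroup E] [InnerProductSpace ℝ E] {f : Fin m → E} {c₀ c₁ : ℝ}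
  (hf : ∀ i j, ⟪f i, f j⟫_ℝ = c₀ + c₁ * (min i j : Fin m))

include hf

theorem inner_GKZ_of_le (h : IsPolygonTriangulation i k S) {s : Fin m} (hs : s ≤ i) :
    ⟪f s, GKZ v f S⟫_ℝ = C * (((k : ℝ) - i) ^ 3 - ((k : ℝ) - i)) * (c₀ + c₁ * s) := by
  have hconst : ∀ σ ∈ S, ∀ r ∈ σ, ⟪f s, f r⟫_ℝ = (c₀ + c₁ * s) + 0 * (r : ℝ) := fun σ hσ r hr ↦ by
    rw [hf, min_eq_left (hs.trans (h.subset_Icc hσ hr).1), zero_mul, add_zero]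
  rw [inner_GKZ_right, GKZ_congr hconst, h.GKZ_affine hC]
  ring

theorem inner_GKZ_of_ge (h : IsPolygonTriangulation i k S) {s : Fin m} (hs : k ≤ s) :
    ⟪f s, GKZ v f S⟫_ℝ =
      C * (((k : ℝ) - i) ^ 3 - ((k : ℝ) - i)) * (c₀ + c₁ * ((i : ℝ) + k) / 2) := by
  have haffine : ∀ σ ∈ S, ∀ r ∈ σ, ⟪f s, f r⟫_ℝ = c₀ + c₁ * (r : ℝ) := fun σ hσ r hr ↦ by
    rw [hf, min_eq_right ((h.subset_Icc hσ hr).2.trans hs)]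
  rw [inner_GKZ_right, GKZ_congr haffine, h.GKZ_affine hC]

theorem inner_GKZ_GKZ (h : IsPolygonTriangulation i j S) (h' : IsPolygonTriangulation j k S') :
    ⟪GKZ v f S, GKZ v f S'⟫_ℝ =
      C * (((j : ℝ) - i) ^ 3 - ((j : ℝ) - i)) * (c₀ + c₁ * ((i : ℝ) + j) / 2) *
        (C * (((k : ℝ) - j) ^ 3 - ((k : ℝ) - j))) := by
  set M := C * (((j : ℝ) - i) ^ 3 - ((j : ℝ) - i)) * (c₀ + c₁ * ((i : ℝ) + j) / 2)
  have hconst : ∀ σ ∈ S', ∀ r ∈ σ, ⟪GKZ v f S, f r⟫_ℝ = M + 0 * (r : ℝ) := fun σ hσ r hr ↦ by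
    rw [real_inner_comm, h.inner_GKZ_of_ge hC hf (h'.subset_Icc hσ hr).1, zero_mul, add_zero]
  rw [inner_GKZ_right, GKZ_congr hconst, h'.GKZ_affine hC]
  ring

/-- The polynomial `F d` of degree seven comes from gluing: the cross terms prescribe
`F (x + y) - F x - F y`, and a single edge forces `F 1 = 0`. -/
theorem inner_GKZ_self (h : IsPolygonTriangulation i k S) {d : ℝ} (hd : d = (k : ℝ) - i) :
    ⟪GKZ v f S, GKZ v f S⟫_ℝ = C ^ 2 * ((c₀ + c₁ * i) * (d ^ 3 - d) ^ 2 +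
      c₁ * (2 / 7 * d ^ 7 - 3 / 5 * d ^ 5 + 1 / 3 * d ^ 3 - 2 / 105 * d)) := by
  subst hd
  induction h with
  | edge hik =>
    rcases cast_sub_cast_eq_zero_or_one_of_wcovBy hik with h | h <;> norm_num [GKZ, h]
  | @glue i j k S S' hij hjk h h' ih ih' =>
    have hf_le {r s : Fin m} (hrs : r ≤ s) : ⟪f r, f s⟫_ℝ = c₀ + c₁ * r := by
      rw [hf, min_eq_left hrs]
    have triangle_self : ⟪f i + (f j + f k), f i + (f j + f k)⟫_ℝ =
        9 * c₀ + c₁ * (5 * i + 3 * j + k) := by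
      simp only [inner_add_left, inner_add_right, real_inner_comm (f i) (f j),
        real_inner_comm (f i) (f k), real_inner_comm (f j) (f k), hf_le le_rfl, hf_le hij.le,
        hf_le hjk.le, hf_le (hij.trans hjk).le]
      ring
    have triangle_left : ⟪f i + (f j + f k), GKZ v f S⟫_ℝ =
        C * (((j : ℝ) - i) ^ 3 - ((j : ℝ) - i)) * (3 * c₀ + c₁ * (2 * i + j)) := by
      simp only [inner_add_left, h.inner_GKZ_of_le hC hf le_rfl, h.inner_GKZ_of_ge hC hf le_rfl,
        h.inner_GKZ_of_ge hC hf hjk.le]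
      ring
    have triangle_right : ⟪f i + (f j + f k), GKZ v f S'⟫_ℝ =
        C * (((k : ℝ) - j) ^ 3 - ((k : ℝ) - j)) * (3 * c₀ + c₁ * (i + j + ((j : ℝ) + k) / 2)) := by
      simp only [inner_add_left, h'.inner_GKZ_of_le hC hf hij.le,
        h'.inner_GKZ_of_le hC hf le_rfl, h'.inner_GKZ_of_ge hC hf le_rfl]
      ring
    rw [h.GKZ_glue hij hjk h', hC _ _ _ hij hjk, real_inner_add_add_self,
      real_inner_add_add_self (GKZ v f S), ih, ih', inner_add_right, real_inner_smul_left,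
      real_inner_smul_right, real_inner_smul_left, real_inner_smul_left, triangle_self,
      triangle_left, triangle_right, h.inner_GKZ_GKZ hC hf h']
    ring

end IsPolygonTriangulation

end GKZVector

section Geometry

theorem exists_left_mem_and_openSegment_inter_nonempty {ι E : Type*} [AddCommGroup E] [Module ℝ E]
    [TopologicalSpace E] [ContinuousAdd E] [ContinuousSMul ℝ E] {s : Finset ι} {K : ι → Set E}
    (hK : ∀ σ ∈ s, IsClosed (K σ)) {x y : E} (h : openSegment ℝ x y ⊆ ⋃ σ ∈ s, K σ) :
    ∃ σ ∈ s, x ∈ K σ ∧ (openSegment ℝ x y ∩ K σ).Nonempty := by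
  have hx : x ∈ closure (⋃ σ ∈ s, openSegment ℝ x y ∩ K σ) := by
    rw [← Set.inter_iUnion₂, Set.inter_eq_left.2 h]
    exact segment_subset_closure_openSegment (left_mem_segment ℝ x y)
  simp only [Finset.closure_biUnion, Set.mem_iUnion] at hx
  obtain ⟨σ, hσ, hxσ⟩ := hx
  exact ⟨σ, hσ, closure_minimal Set.inter_subset_right (hK σ hσ) hxσ,
    closure_nonempty_iff.1 ⟨x, hxσ⟩⟩

theorem exists_apply_le_of_mem_convexHull_image {ι E : Type*} [AddCommGroup E] [Module ℝ E]
    {v : ι → E} {s : Set ι} (P : E →ᵃ[ℝ] ℝ) {x : E} (hx : x ∈ convexHull ℝ (v '' s)) :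
    ∃ r ∈ s, P (v r) ≤ P x := by
  have hP : ConcaveOn ℝ Set.univ P := (concaveOn_id convex_univ).comp_affineMap P
  simpa using hP.exists_le_of_mem_convexHull (Set.subset_univ _) hx

theorem exists_le_apply_of_mem_convexHull_image {ι E : Type*} [AddCommGroup E] [Module ℝ E]
    {v : ι → E} {s : Set ι} (P : E →ᵃ[ℝ] ℝ) {x : E} (hx : x ∈ convexHull ℝ (v '' s)) :
    ∃ r ∈ s, P x ≤ P (v r) := by
  have hP : ConvexOn ℝ Set.univ P := (convexOn_id convex_univ).comp_affineMap P
  simpa using hP.exists_ge_of_mem_convexHull (Set.subset_univ _) hx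

theorem parabola_openSegment_inter_nonempty {E : Type*} [AddCommGroup E] [Module ℝ E]
    (c u w : E) {t₁ t₂ t₃ t₄ : ℝ} (h₁₂ : t₁ < t₂) (h₂₃ : t₂ < t₃) (h₃₄ : t₃ < t₄) :
    (openSegment ℝ (c + t₁ • u + t₁ ^ 2 • w) (c + t₃ • u + t₃ ^ 2 • w) ∩
      openSegment ℝ (c + t₂ • u + t₂ ^ 2 • w) (c + t₄ • u + t₄ ^ 2 • w)).Nonempty := by
  have := sub_pos.2 h₁₂
  have := sub_pos.2 h₂₃
  have := sub_pos.2 h₃₄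
  have h₁₃ : 0 < t₃ - t₁ := by linarith
  have h₁₄ : 0 < t₄ - t₁ := by linarith
  have h₂₄ : 0 < t₄ - t₂ := by linarith
  have hs : 0 < t₂ + t₄ - t₁ - t₃ := by linarith
  refine ⟨_, ⟨(t₃ - t₂) * (t₄ - t₃) / ((t₂ + t₄ - t₁ - t₃) * (t₃ - t₁)),
    (t₂ - t₁) * (t₄ - t₁) / ((t₂ + t₄ - t₁ - t₃) * (t₃ - t₁)), by positivity, by positivity,
    by field_simp; ring, rfl⟩, ⟨(t₄ - t₁) * (t₄ - t₃) / ((t₂ + t₄ - t₁ - t₃) * (t₄ - t₂)),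
    (t₂ - t₁) * (t₃ - t₂) / ((t₂ + t₄ - t₁ - t₃) * (t₄ - t₂)), by positivity, by positivity,
    by field_simp; ring, ?_⟩⟩
  match_scalars <;> field_simp <;> ring

open scoped Pointwise in
theorem triArea_eq_abs_mul_volume {m : ℕ} (v : Fin m → ℝ × ℝ) (i j k : Fin m) :
    triArea v {i, j, k} =
      |((v j).1 - (v i).1) * ((v k).2 - (v i).2) - ((v k).1 - (v i).1) * ((v j).2 - (v i).2)| *
        (volume (convexHull ℝ ({0, (1, 0), (0, 1)} : Set (ℝ × ℝ)))).toReal := by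
  set L : ℝ × ℝ →ₗ[ℝ] ℝ × ℝ :=
    Matrix.toLin (Module.Basis.finTwoProd ℝ) (Module.Basis.finTwoProd ℝ)
      !![(v j).1 - (v i).1, (v k).1 - (v i).1; (v j).2 - (v i).2, (v k).2 - (v i).2] with hL
  have himage : v '' (({i, j, k} : Finset (Fin m)) : Set (Fin m)) =
      v i +ᵥ L '' ({0, (1, 0), (0, 1)} : Set (ℝ × ℝ)) := by
    have hLj : L (1, 0) = v j - v i := by simp [hL, Matrix.toLin_finTwoProd_apply, Prod.sub_def]
    have hLk : L (0, 1) = v k - v i := by simp [hL, Matrix.toLin_finTwoProd_apply, Prod.sub_def]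
    simp [Set.image_insert_eq, hLj, hLk, Set.vadd_set_insert]
  rw [triArea, himage, convexHull_vadd, measure_vadd, ← LinearMap.image_convexHull,
    Measure.addHaar_image_linearMap, hL, LinearMap.det_toLin, Matrix.det_fin_two_of,
    ENNReal.toReal_mul, ENNReal.toReal_ofReal (abs_nonneg _)]

/-- The points `v i` lie on a nondegenerate parabola `t ↦ c + t • u + t ^ 2 • w`, at parameters
`t i` increasing in `i`; nondegeneracy is the linear independence of `u` and `w`, expressed by a
determinant. -/
structure IsParabolaSample {m : ℕ} (v : Fin m → ℝ × ℝ) (t : Fin m → ℝ) : Prop where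
  strictMono : StrictMono t
  exists_param : ∃ c u w : ℝ × ℝ, u.1 * w.2 - w.1 * u.2 ≠ 0 ∧
    ∀ i, v i = c + t i • u + t i ^ 2 • w

namespace IsParabolaSample

variable {m : ℕ} {v : Fin m → ℝ × ℝ} {t : Fin m → ℝ}

/-- The zero set of `P` is the secant line through the parameters `x` and `y`. -/
theorem exists_affineMap (hv : IsParabolaSample v t) (x y : ℝ) :
    ∃ P : ℝ × ℝ →ᵃ[ℝ] ℝ, ∀ i, P (v i) = (t i - x) * (t i - y) := by
  obtain ⟨c, u, w, hdet, hvt⟩ := hv.exists_param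
  -- Cramer's rule for the coordinates with respect to `u` and `w`
  let coordU : ℝ × ℝ →ₗ[ℝ] ℝ := (u.1 * w.2 - w.1 * u.2)⁻¹ •
    (w.2 • LinearMap.fst ℝ ℝ ℝ - w.1 • LinearMap.snd ℝ ℝ ℝ)
  let coordW : ℝ × ℝ →ₗ[ℝ] ℝ := (u.1 * w.2 - w.1 * u.2)⁻¹ •
    (u.1 • LinearMap.snd ℝ ℝ ℝ - u.2 • LinearMap.fst ℝ ℝ ℝ)
  refine ⟨(coordW - (x + y) • coordU).toAffineMap.comp
    (AffineMap.id ℝ _ - AffineMap.const ℝ _ c) + AffineMap.const ℝ _ (x * y), fun i ↦ ?_⟩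
  have hsub : v i - c = t i • u + t i ^ 2 • w := by rw [hvt]; abel
  have hU : coordU (v i - c) = t i := by
    rw [hsub]
    change _⁻¹ * (w.2 * (t i * u.1 + t i ^ 2 * w.1) - w.1 * (t i * u.2 + t i ^ 2 * w.2)) = _
    rw [inv_mul_eq_iff_eq_mul₀ hdet]
    ring
  have hW : coordW (v i - c) = t i ^ 2 := by
    rw [hsub]
    change _⁻¹ * (u.1 * (t i * u.2 + t i ^ 2 * w.2) - u.2 * (t i * u.1 + t i ^ 2 * w.1)) = _
    rw [inv_mul_eq_iff_eq_mul₀ hdet]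
    ring
  change coordW (v i - c) - (x + y) * coordU (v i - c) + x * y = _
  rw [hU, hW]
  ring

theorem mem_of_mem_convexHull (hv : IsParabolaSample v t) {σ : Finset (Fin m)} {i : Fin m}
    (hi : v i ∈ convexHull ℝ (v '' σ)) : i ∈ σ := by
  obtain ⟨P, hP⟩ := hv.exists_affineMap (t i) (t i)
  obtain ⟨r, hr, hri⟩ := exists_apply_le_of_mem_convexHull_image P hi
  simp only [hP, sub_self, mul_zero] at hri
  have hsq : t r - t i = 0 := mul_self_eq_zero.1 (le_antisymm hri (mul_self_nonneg _))
  rwa [← hv.strictMono.injective (sub_eq_zero.1 hsq)]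

theorem exists_triArea_eq (hv : IsParabolaSample v t) :
    ∃ C, ∀ i j k : Fin m, i < j → j < k →
      triArea v {i, j, k} = C * ((t j - t i) * (t k - t i) * (t k - t j)) := by
  obtain ⟨c, u, w, -, hvt⟩ := hv.exists_param
  refine ⟨|u.1 * w.2 - w.1 * u.2| *
    (volume (convexHull ℝ ({0, (1, 0), (0, 1)} : Set (ℝ × ℝ)))).toReal, fun i j k hij hjk ↦ ?_⟩
  have hpos : 0 < (t j - t i) * (t k - t i) * (t k - t j) :=
    mul_pos (mul_pos (sub_pos.2 (hv.strictMono hij)) (sub_pos.2 (hv.strictMono (hij.trans hjk))))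
      (sub_pos.2 (hv.strictMono hjk))
  have hdet : ((v j).1 - (v i).1) * ((v k).2 - (v i).2) -
      ((v k).1 - (v i).1) * ((v j).2 - (v i).2) =
      (u.1 * w.2 - w.1 * u.2) * ((t j - t i) * (t k - t i) * (t k - t j)) := by
    simp only [hvt, Prod.fst_add, Prod.snd_add, Prod.smul_fst, Prod.smul_snd, smul_eq_mul]
    ring
  rw [triArea_eq_abs_mul_volume, hdet, abs_mul, abs_of_pos hpos]
  ring

end IsParabolaSample

/-- The open segment from `v i` to `v k` meets only triangles of `T` that have both `i` and `k`
as vertices. This holds for the edges of the triangles and for the sides of the whole polygon. -/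
def IsSide {m : ℕ} (v : Fin m → ℝ × ℝ) (T : Finset (Finset (Fin m))) (i k : Fin m) : Prop :=
  ∀ σ ∈ T, ∀ z ∈ openSegment ℝ (v i) (v k), z ∈ convexHull ℝ (v '' σ) → i ∈ σ ∧ k ∈ σ

namespace IsTriangulation

variable {m : ℕ} {v : Fin m → ℝ × ℝ} {t : Fin m → ℝ} {T : Finset (Finset (Fin m))}

theorem isSide_of_mem (hT : IsTriangulation v T) (hv : IsParabolaSample v t) {σ : Finset (Fin m)}
    (hσ : σ ∈ T) {i k : Fin m} (hi : i ∈ σ) (hk : k ∈ σ) : IsSide v T i k := by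
  intro τ hτ z hz hzτ
  have hface := (hT.2.2 σ hσ τ hτ).1
  have hiσ : v i ∈ convexHull ℝ (v '' σ) := subset_convexHull ℝ _ ⟨i, hi, rfl⟩
  have hkσ : v k ∈ convexHull ℝ (v '' σ) := subset_convexHull ℝ _ ⟨k, hk, rfl⟩
  have hzσ := (convex_convexHull ℝ _).openSegment_subset hiσ hkσ hz
  exact ⟨hv.mem_of_mem_convexHull (hface.left_mem_of_mem_openSegment hiσ hkσ ⟨hzσ, hzτ⟩ hz).2,
    hv.mem_of_mem_convexHull (hface.right_mem_of_mem_openSegment hiσ hkσ ⟨hzσ, hzτ⟩ hz).2⟩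

theorem isNonCrossing (hT : IsTriangulation v T) (hv : IsParabolaSample v t) :
    IsNonCrossing T := by
  intro σ hσ τ hτ i j k l hi hk hj hl hij hjk hkl
  obtain ⟨c, u, w, -, hvt⟩ := hv.exists_param
  obtain ⟨z, hzik, hzjl⟩ := parabola_openSegment_inter_nonempty c u w
    (hv.strictMono hij) (hv.strictMono hjk) (hv.strictMono hkl)
  simp only [← hvt] at hzik hzjl
  have hzτ : z ∈ convexHull ℝ (v '' τ) := (convex_convexHull ℝ _).openSegment_subset
    (subset_convexHull ℝ _ (Set.mem_image_of_mem v hj))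
    (subset_convexHull ℝ _ (Set.mem_image_of_mem v hl)) hzjl
  obtain ⟨hiτ, hkτ⟩ := hT.isSide_of_mem hv hσ hi hk τ hτ z hzik hzτ
  have hsub : insert i {j, k, l} ⊆ τ := by simp [Finset.insert_subset_iff, *]
  have hcard := Finset.card_le_card hsub
  rw [Finset.card_insert_of_notMem (by simp [hij.ne, (hij.trans hjk).ne,
    (hij.trans (hjk.trans hkl)).ne]), card_triple hjk hkl, (hT.1 τ hτ).1] at hcard
  omega

theorem exists_triple_mem (hT : IsTriangulation v T) (hv : IsParabolaSample v t) {i k : Fin m}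
    (hik : i < k) (hside : IsSide v T i k) (hcov : ¬ i ⋖ k) :
    ∃ j, i < j ∧ j < k ∧ {i, j, k} ∈ T := by
  obtain ⟨l, hil, hlk⟩ := exists_lt_lt_of_not_covBy hik hcov
  have hmem r : v r ∈ convexHull ℝ (Set.range v) := subset_convexHull ℝ _ ⟨r, rfl⟩
  have hconv := convex_convexHull ℝ (Set.range v)
  obtain ⟨z, hz⟩ : (openSegment ℝ (v i) (v k)).Nonempty := ⟨_, midpoint_mem_openSegment _ _⟩
  have hcover : openSegment ℝ z (v l) ⊆ ⋃ σ ∈ T, convexHull ℝ (v '' σ) := by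
    rw [hT.2.1]
    exact hconv.openSegment_subset (hconv.openSegment_subset (hmem i) (hmem k) hz) (hmem l)
  have hclosed : ∀ σ ∈ T, IsClosed (convexHull ℝ (v '' (σ : Set (Fin m)))) := fun σ _ ↦
    ((σ.finite_toSet.image v).isCompact_convexHull ℝ).isClosed
  obtain ⟨σ, hσ, hzσ, y, hy, hyσ⟩ :=
    exists_left_mem_and_openSegment_inter_nonempty hclosed hcover
  obtain ⟨hiσ, hkσ⟩ := hside σ hσ z hz hzσ
  obtain ⟨P, hP⟩ := hv.exists_affineMap (t i) (t k)
  have hPz : P z = 0 := by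
    obtain ⟨a, b, -, -, hab, rfl⟩ := hz
    simp [Convex.combo_affine_apply hab, hP]
  have hPy : P y < 0 := by
    obtain ⟨a, b, -, hb, hab, rfl⟩ := hy
    rw [Convex.combo_affine_apply hab, hPz, hP, smul_zero, zero_add, smul_eq_mul]
    exact mul_neg_of_pos_of_neg hb (mul_neg_of_pos_of_neg (sub_pos.2 (hv.strictMono hil))
      (sub_neg.2 (hv.strictMono hlk)))
  obtain ⟨j, hjσ, hj⟩ := exists_apply_le_of_mem_convexHull_image P hyσ
  have hlt : i < j ∧ j < k := by
    have := hv.strictMono hik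
    simp only [← hv.strictMono.lt_iff_lt]
    rw [hP] at hj
    rcases mul_neg_iff.1 (hj.trans_lt hPy) with h | h <;> constructor <;> linarith
  have hsub : {i, j, k} ⊆ σ := by simp [Finset.insert_subset_iff, hiσ, hkσ, Finset.mem_coe.1 hjσ]
  have hcard : σ.card ≤ ({i, j, k} : Finset (Fin m)).card := by
    rw [(hT.1 σ hσ).1, card_triple hlt.1 hlt.2]
  exact ⟨j, hlt.1, hlt.2, Finset.eq_of_subset_of_card_le hsub hcard ▸ hσ⟩

end IsTriangulation

/-- If a triangle misses one end point of the side, the secant line through the other end point and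
the closest vertex of the triangle separates it from the side. -/
theorem IsParabolaSample.isSide_zero_last {n : ℕ} {v : Fin (n + 1) → ℝ × ℝ} {t : Fin (n + 1) → ℝ}
    (hv : IsParabolaSample v t) (T : Finset (Finset (Fin (n + 1)))) :
    IsSide v T 0 (Fin.last n) := by
  rintro σ - z ⟨a, b, ha, hb, hab, rfl⟩ hz
  have hne : σ.Nonempty := by
    simpa using convexHull_nonempty_iff.1 ⟨_, hz⟩
  constructor
  · by_contra h0
    obtain ⟨P, hP⟩ := hv.exists_affineMap (t (σ.min' hne)) (t (Fin.last n))
    obtain ⟨r, hr, hle⟩ := exists_le_apply_of_mem_convexHull_image P hz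
    rw [Convex.combo_affine_apply hab, hP, hP, hP, sub_self, mul_zero, smul_zero, add_zero] at hle
    have hlt : t 0 < t (σ.min' hne) :=
      hv.strictMono (Fin.pos_iff_ne_zero.2 fun h ↦ h0 (h ▸ σ.min'_mem hne))
    have hlast : t (σ.min' hne) ≤ t (Fin.last n) := hv.strictMono.monotone (Fin.le_last _)
    have hneg : (t r - t (σ.min' hne)) * (t r - t (Fin.last n)) ≤ 0 :=
      mul_nonpos_of_nonneg_of_nonpos (sub_nonneg.2 (hv.strictMono.monotone (σ.min'_le r hr)))
        (sub_nonpos.2 (hv.strictMono.monotone (Fin.le_last r)))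
    exact (hle.trans hneg).not_gt
      (smul_pos ha (mul_pos_of_neg_of_neg (sub_neg.2 hlt) (sub_neg.2 (hlt.trans_le hlast))))
  · by_contra hlast
    obtain ⟨P, hP⟩ := hv.exists_affineMap (t 0) (t (σ.max' hne))
    obtain ⟨r, hr, hle⟩ := exists_le_apply_of_mem_convexHull_image P hz
    rw [Convex.combo_affine_apply hab, hP, hP, hP, sub_self, zero_mul, smul_zero, zero_add] at hle
    have hlt : t (σ.max' hne) < t (Fin.last n) :=
      hv.strictMono (Fin.lt_last_iff_ne_last.2 fun h ↦ hlast (h ▸ σ.max'_mem hne))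
    have h0 : t 0 ≤ t (σ.max' hne) := hv.strictMono.monotone (Fin.zero_le _)
    have hneg : (t r - t 0) * (t r - t (σ.max' hne)) ≤ 0 :=
      mul_nonpos_of_nonneg_of_nonpos (sub_nonneg.2 (hv.strictMono.monotone (Fin.zero_le r)))
        (sub_nonpos.2 (hv.strictMono.monotone (σ.le_max' r hr)))
    exact (hle.trans hneg).not_gt
      (smul_pos hb (mul_pos (sub_pos.2 (h0.trans_lt hlt)) (sub_pos.2 hlt)))

theorem IsTriangulation.isPolygonTriangulation {n : ℕ} {v : Fin (n + 1) → ℝ × ℝ}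
    {t : Fin (n + 1) → ℝ} (hv : IsParabolaSample v t) {T : Finset (Finset (Fin (n + 1)))}
    (hT : IsTriangulation v T) : IsPolygonTriangulation 0 (Fin.last n) T := by
  have h := (hT.isNonCrossing hv).isPolygonTriangulation (fun σ hσ ↦ (hT.1 σ hσ).1)
    (fun σ hσ i hi k hk ↦ hT.isSide_of_mem hv hσ hi hk)
    (fun i k hside hik ↦ hT.exists_triple_mem hv hik hside) 0 (Fin.last n) (Fin.zero_le _)
    (hv.isSide_zero_last T)
  have hall : trianglesBetween T 0 (Fin.last n) = T :=
    Finset.filter_true_of_mem fun σ _ r _ ↦ Finset.mem_Icc.2 ⟨Fin.zero_le r, Fin.le_last r⟩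
  rwa [hall] at h

end Geometry

section QuadraticCurve

open Polynomial

theorem coeff_mul_coeff_sub_ne_zero_of_linearIndependent {K : Type*} [Field K] {p q : K[X]}
    (hp : p.degree ≤ 2) (hq : q.degree ≤ 2) (hind : LinearIndependent K ![p, q, 1]) :
    p.coeff 1 * q.coeff 2 - p.coeff 2 * q.coeff 1 ≠ 0 := by
  intro hdet
  obtain ⟨x, hx, hx0⟩ := Matrix.exists_vecMul_eq_zero_iff.2
    ((Matrix.det_fin_two_of (p.coeff 1) (p.coeff 2) (q.coeff 1) (q.coeff 2)).trans hdet)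
  have h1 : x 0 * p.coeff 1 + x 1 * q.coeff 1 = 0 := by
    simpa [Matrix.vecMul, dotProduct, Fin.sum_univ_two] using congrFun hx0 0
  have h2 : x 0 * p.coeff 2 + x 1 * q.coeff 2 = 0 := by
    simpa [Matrix.vecMul, dotProduct, Fin.sum_univ_two] using congrFun hx0 1
  have hconst : x 0 • p + x 1 • q = C (x 0 * p.coeff 0 + x 1 * q.coeff 0) := by
    rw [eq_quadratic_of_degree_le_two hp, eq_quadratic_of_degree_le_two hq]
    ext n
    rcases n with _ | _ | _ | n <;> simp [coeff_X, coeff_C, h1, h2]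
  have hzero := Fintype.linearIndependent_iff.1 hind
    ![x 0, x 1, -(x 0 * p.coeff 0 + x 1 * q.coeff 0)] (by
      rw [Fin.sum_univ_three]
      change x 0 • p + x 1 • q + -(x 0 * p.coeff 0 + x 1 * q.coeff 0) • (1 : K[X]) = 0
      rw [hconst, smul_eq_C_mul, mul_one, ← C_add, add_neg_cancel, C_0])
  exact hx (funext (Fin.forall_fin_two.2 ⟨hzero 0, hzero 1⟩))

theorem isParabolaSample_of_eq_eval {p q : ℝ[X]} (hp : p.degree ≤ 2) (hq : q.degree ≤ 2)
    (hind : LinearIndependent ℝ ![p, q, 1]) (a : ℝ) {b : ℝ} (hb : b ≠ 0) {m : ℕ} {t : Fin m → ℝ}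
    (ht : StrictMono t) {v : Fin m → ℝ × ℝ}
    (hv : ∀ i, v i = (p.eval (a + t i * b), q.eval (a + t i * b))) : IsParabolaSample v t := by
  have eval_eq {r : ℝ[X]} (hr : r.degree ≤ 2) (s : ℝ) : r.eval (a + s * b) =
      r.eval a + s * (b * (r.coeff 1 + 2 * r.coeff 2 * a)) + s ^ 2 * (r.coeff 2 * b ^ 2) := by
    have heval (x : ℝ) : r.eval x = r.coeff 2 * x ^ 2 + r.coeff 1 * x + r.coeff 0 := by
      conv_lhs => rw [eq_quadratic_of_degree_le_two hr]
      simp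
    rw [heval, heval]
    ring
  refine ⟨ht, (p.eval a, q.eval a), (b * (p.coeff 1 + 2 * p.coeff 2 * a),
    b * (q.coeff 1 + 2 * q.coeff 2 * a)), (p.coeff 2 * b ^ 2, q.coeff 2 * b ^ 2), ?_, fun i ↦ ?_⟩
  · have hdet := mul_ne_zero (pow_ne_zero 3 hb)
      (coeff_mul_coeff_sub_ne_zero_of_linearIndependent hp hq hind)
    convert hdet using 1
    ring
  · rw [hv, eval_eq hp, eval_eq hq]
    rfl

end QuadraticCurve

section Norm

open scoped InnerProductSpace

theorem inner_sum_sum_of_orthonormal {ι 𝕜 E : Type*} [DecidableEq ι] [RCLike 𝕜]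
    [SeminormedAddCommGroup E] [InnerProductSpace 𝕜 E] {e : ι → E} (he : Orthonormal 𝕜 e)
    (s t : Finset ι) : ⟪∑ i ∈ s, e i, ∑ i ∈ t, e i⟫_𝕜 = (s ∩ t).card := by
  simp [sum_inner, inner_sum, orthonormal_iff_ite.1 he, Finset.inter_comm]

theorem inner_sum_Iic_single {m : ℕ} (i j : Fin m) :
    ⟪∑ r ∈ Finset.Iic i, EuclideanSpace.single r (1 : ℝ),
      ∑ r ∈ Finset.Iic j, EuclideanSpace.single r (1 : ℝ)⟫_ℝ = 1 + (min i j : Fin m) := by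
  have hinter : Finset.Iic i ∩ Finset.Iic j = Finset.Iic (min i j) := by ext; simp
  rw [inner_sum_sum_of_orthonormal EuclideanSpace.orthonormal_single, hinter, Fin.card_Iic]
  push_cast
  ring

theorem gkz_norm_eq_of_quadratic_curve_general {E : Type*} [NormedAddCommGroup E]
    [InnerProductSpace ℝ E] {n : ℕ} {p q : Polynomial ℝ} (hp : p.degree ≤ 2) (hq : q.degree ≤ 2)
    (hind : LinearIndependent ℝ ![p, q, (1 : Polynomial ℝ)]) (a : ℝ) {b : ℝ} (hb : b ≠ 0)
    {v : Fin (n + 1) → ℝ × ℝ} (hv : ∀ i : Fin (n + 1),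
      v i = (p.eval (a + (i : ℕ) * b), q.eval (a + (i : ℕ) * b)))
    {f : Fin (n + 1) → E} {c₀ c₁ : ℝ}
    (hf : ∀ i j, ⟪f i, f j⟫_ℝ = c₀ + c₁ * (min i j : Fin (n + 1)))
    {T T' : Finset (Finset (Fin (n + 1)))} (hT : IsTriangulation v T)
    (hT' : IsTriangulation v T') : ‖GKZ v f T‖ = ‖GKZ v f T'‖ := by
  have hsample : IsParabolaSample v fun i ↦ (i : ℝ) :=
    isParabolaSample_of_eq_eval hp hq hind a hb (Nat.strictMono_cast.comp Fin.val_strictMono) hv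
  obtain ⟨C, hC⟩ := hsample.exists_triArea_eq
  rw [norm_eq_sqrt_real_inner, norm_eq_sqrt_real_inner,
    (hT.isPolygonTriangulation hsample).inner_GKZ_self hC hf rfl,
    (hT'.isPolygonTriangulation hsample).inner_GKZ_self hC hf rfl]

end Norm

/-- All GKZ vectors of triangulations of `n+3` equally spaced points on a
(nondegenerate) quadratic plane curve, with respect to the partial sums of the
standard basis vectors, have the same Euclidean norm. -/
theorem gkz_norm_eq_of_quadratic_curve (n : ℕ) (p q : Polynomial ℝ)
    (hp : p.degree ≤ 2) (hq : q.degree ≤ 2)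
    (hind : LinearIndependent ℝ ![p, q, (1 : Polynomial ℝ)])
    (a b : ℝ) (hb : b ≠ 0)
    (v : Fin (n + 3) → ℝ × ℝ)
    (hv : ∀ i : Fin (n + 3),
      v i = (p.eval (a + (i : ℕ) * b), q.eval (a + (i : ℕ) * b)))
    (f : Fin (n + 3) → EuclideanSpace ℝ (Fin (n + 3)))
    (hf : ∀ i, f i = ∑ j ∈ Finset.Iic i, EuclideanSpace.single j (1 : ℝ))
    (T T' : Finset (Finset (Fin (n + 3))))
    (hT : IsTriangulation v T) (hT' : IsTriangulation v T') :
    ‖GKZ v f T‖ = ‖GKZ v f T'‖ :=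
  gkz_norm_eq_of_quadratic_curve_general hp hq hind a hb hv (c₀ := 1) (c₁ := 1)
    (fun i j ↦ by rw [hf, hf, inner_sum_Iic_single, one_mul]) hT hT'
end

section
/- Let n ≥ 0 and let v_i := (i, i²) ∈ ℝ² for i = 0, 1, …, n+2 be points on the standard parabola at consecutive integer parameters. Let f_i := e_0 + e_1 + ⋯ + e_i ∈ ℝ^{n+3} (partial sums of the standard basis vectors). Then for any two triangulations T and T′ of the point configuration {v_0, …, v_{n+2}}, the GKZ vectors have equal Euclidean norm: ‖GKZ(T)‖ = ‖GKZ(T′)‖. -/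
open MeasureTheory

/-!
Since `⟪f i, f j⟫ = min i j + 1` is affine in `i + j` and `|i - j|`, the norm of `∑ i, φ i • f i`
depends only on `∑ φ i`, `∑ φ i * i` and `∑ φ i * φ j * |i - j|`. For the GKZ weights `φ` these
are computed by recursion on polygons with vertices `a, a + 1, …, c`. The chord from `a` to `c` is a
side of a unique triangle `{a, b, c}` lying below it, and every other triangle lies over `[a, b]` or
over `[b, c]`. Read from left to right, the weights of the polygon are a sum of five pieces with
successive supports, so that all absolute values between different pieces open up and the three
quantities for `[a, c]` follow from those for `[a, b]` and `[b, c]`. They turn out to be functions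
of `a` and `c` alone, whatever the choice of `b`.
-/

/-! ### Areas of triangles -/

/-- The area of the triangle with vertices `(0, 0)`, `(1, 0)`, `(0, 1)`. Areas enter the argument
only through their ratios to this one, so that its value is left unevaluated. -/
noncomputable def unitTriangleArea : ℝ :=
  (volume (convexHull ℝ ({(0, 0), (1, 0), (0, 1)} : Set (ℝ × ℝ)))).toReal

open scoped Pointwise in
theorem toReal_volume_convexHull_triple (p q r : ℝ × ℝ) :
    (volume (convexHull ℝ {p, q, r})).toReal =
      |(q.1 - p.1) * (r.2 - p.2) - (r.1 - p.1) * (q.2 - p.2)| * unitTriangleArea := by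
  let A : ℝ × ℝ →ₗ[ℝ] ℝ × ℝ := Matrix.toLin (.finTwoProd ℝ) (.finTwoProd ℝ)
    !![q.1 - p.1, r.1 - p.1; q.2 - p.2, r.2 - p.2]
  have himage : ({p, q, r} : Set (ℝ × ℝ)) = p +ᵥ A '' {(0, 0), (1, 0), (0, 1)} := by
    simp only [A, Matrix.toLin_finTwoProd_apply, Set.image_insert_eq, mul_zero, add_zero, mul_one,
      Set.image_singleton, zero_add, Set.vadd_set_insert, vadd_eq_add, Set.vadd_set_singleton]
    simp only [← Prod.fst_sub, ← Prod.snd_sub, Prod.mk_zero_zero, add_zero, Prod.mk.eta,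
      add_sub_cancel]
  rw [himage, convexHull_vadd, ← A.image_convexHull, measure_vadd,
    Measure.addHaar_image_linearMap, LinearMap.det_toLin, Matrix.det_fin_two_of,
    ENNReal.toReal_mul, ENNReal.toReal_ofReal (abs_nonneg _), unitTriangleArea]

/-! ### Points on the parabola -/

/-- The point with abscissa `x` on the standard parabola. -/
def parabola (x : ℝ) : ℝ × ℝ := (x, x ^ 2)

theorem triArea_parabola {m : ℕ} {t : Fin m → ℝ} (ht : Monotone t) {a b c : Fin m}
    (hab : a ≤ b) (hbc : b ≤ c) :
    triArea (parabola ∘ t) {a, b, c} =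
      unitTriangleArea * ((t b - t a) * (t c - t b) * (t c - t a)) := by
  have hdet : (t b - t a) * (t c ^ 2 - t a ^ 2) - (t c - t a) * (t b ^ 2 - t a ^ 2) =
      (t b - t a) * (t c - t b) * (t c - t a) := by ring
  have hnonneg : 0 ≤ (t b - t a) * (t c - t b) * (t c - t a) :=
    mul_nonneg (mul_nonneg (sub_nonneg.2 (ht hab)) (sub_nonneg.2 (ht hbc)))
      (sub_nonneg.2 (ht (hab.trans hbc)))
  simp only [triArea, Finset.coe_insert, Finset.coe_singleton, Set.image_insert_eq,
    Set.image_singleton, toReal_volume_convexHull_triple, Function.comp_apply, parabola, hdet,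
    abs_of_nonneg hnonneg]
  ring

/-- The affine function `z ↦ z.2 - (p + q) * z.1 + p * q`, which vanishes on the secant of the
parabola through the points with abscissas `p` and `q`. -/
noncomputable def secantDefect (p q : ℝ) : ℝ × ℝ →ᵃ[ℝ] ℝ :=
  (LinearMap.snd ℝ ℝ ℝ - (p + q) • LinearMap.fst ℝ ℝ ℝ).toAffineMap +
    AffineMap.const ℝ (ℝ × ℝ) (p * q)

theorem secantDefect_parabola (p q x : ℝ) :
    secantDefect p q (parabola x) = (x - p) * (x - q) := by
  simp only [secantDefect, parabola, AffineMap.coe_add, LinearMap.coe_toAffineMap,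
    AffineMap.coe_const, Pi.add_apply, LinearMap.sub_apply, LinearMap.snd_apply,
    LinearMap.smul_apply, LinearMap.fst_apply, smul_eq_mul, Function.const_apply]
  ring

theorem secantDefect_eq_zero_of_mem_openSegment {a c : ℝ} {z : ℝ × ℝ}
    (hz : z ∈ openSegment ℝ (parabola a) (parabola c)) : secantDefect a c z = 0 := by
  obtain ⟨r, s, -, -, hrs, rfl⟩ := hz
  simp [Convex.combo_affine_apply hrs, secantDefect_parabola]

theorem affineMap_apply_mem_of_mem_convexHull_image {ι E F : Type*} [AddCommGroup E] [Module ℝ E]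
    [AddCommGroup F] [Module ℝ F] (g : E →ᵃ[ℝ] F) {s : Set F} (hs : Convex ℝ s) {v : ι → E}
    {σ : Set ι} (h : ∀ i ∈ σ, g (v i) ∈ s) {z : E} (hz : z ∈ convexHull ℝ (v '' σ)) : g z ∈ s :=
  convexHull_min (t := g ⁻¹' s) (Set.image_subset_iff.2 h) (hs.affine_preimage g) hz

theorem convexIndependent_parabola {ι : Type*} {t : ι → ℝ} (ht : Function.Injective t) :
    ConvexIndependent ℝ (parabola ∘ t) := by
  intro σ i hi
  by_contra hiσ
  have hpos : secantDefect (t i) (t i) (parabola (t i)) ∈ Set.Ioi 0 := by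
    refine affineMap_apply_mem_of_mem_convexHull_image _ (convex_Ioi 0) (fun j hj => ?_) hi
    have hji : t j ≠ t i := fun h => hiσ (ht h ▸ hj)
    simpa [secantDefect_parabola] using sub_ne_zero.2 hji
  simp [secantDefect_parabola] at hpos

theorem mem_openSegment_parabola {a c x : ℝ} (hax : a < x) (hxc : x < c) :
    (x, (a + c) * x - a * c) ∈ openSegment ℝ (parabola a) (parabola c) := by
  have hac : 0 < c - a := by linarith
  refine ⟨(c - x) / (c - a), (x - a) / (c - a), div_pos (by linarith) hac,
    div_pos (by linarith) hac, by field_simp; ring, ?_⟩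
  simp only [parabola, Prod.smul_mk, smul_eq_mul, Prod.mk_add_mk, Prod.mk.injEq]
  constructor <;> field_simp <;> ring

theorem openSegment_parabola_inter_nonempty {a b c d : ℝ} (hab : a < b) (hbc : b < c)
    (hcd : c < d) :
    (openSegment ℝ (parabola a) (parabola c) ∩
      openSegment ℝ (parabola b) (parabola d)).Nonempty := by
  have hslope : 0 < b + d - (a + c) := by linarith
  obtain ⟨x, hx⟩ : ∃ x, x * (b + d - (a + c)) = b * d - a * c :=
    ⟨_, div_mul_cancel₀ _ hslope.ne'⟩
  have hbx : b < x := by nlinarith [mul_pos (sub_pos.2 hab) (sub_pos.2 hbc)]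
  have hxc : x < c := by nlinarith [mul_pos (sub_pos.2 hbc) (sub_pos.2 hcd)]
  have hordinate : (a + c) * x - a * c = (b + d) * x - b * d := by linarith
  exact ⟨_, mem_openSegment_parabola (hab.trans hbx) hxc,
    hordinate ▸ mem_openSegment_parabola hbx (hxc.trans hcd)⟩

/-! ### Edges of triangulations -/

/-- The chord from `v a` to `v c` is not cut by the triangles of `T`: a triangle that meets its
relative interior has both `a` and `c` as vertices. This covers at once the edges of a triangulation
`T` and the edges of the polygon. -/
def IsEdge {m : ℕ} (v : Fin m → ℝ × ℝ) (T : Finset (Finset (Fin m))) (a c : Fin m) : Prop :=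
  ∀ τ ∈ T, ∀ z ∈ openSegment ℝ (v a) (v c), z ∈ convexHull ℝ (v '' ↑τ) → a ∈ τ ∧ c ∈ τ

theorem openSegment_subset_convexHull_image {ι E : Type*} [AddCommGroup E] [Module ℝ E]
    {v : ι → E} {σ : Set ι} {a c : ι} (ha : a ∈ σ) (hc : c ∈ σ) :
    openSegment ℝ (v a) (v c) ⊆ convexHull ℝ (v '' σ) :=
  (openSegment_subset_segment ℝ _ _).trans <|
    segment_subset_convexHull (Set.mem_image_of_mem v ha) (Set.mem_image_of_mem v hc)

theorem IsTriangulation.isEdge {m : ℕ} {v : Fin m → ℝ × ℝ} {T : Finset (Finset (Fin m))}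
    (hT : IsTriangulation v T) (hv : ConvexIndependent ℝ v) {σ : Finset (Fin m)} (hσ : σ ∈ T)
    {a c : Fin m} (ha : a ∈ σ) (hc : c ∈ σ) : IsEdge v T a c := by
  intro τ hτ z hz hzτ
  have hface := (hT.2.2 σ hσ τ hτ).1
  have hvertex {i : Fin m} (hi : i ∈ σ) : v i ∈ convexHull ℝ (v '' ↑σ) :=
    subset_convexHull ℝ _ (Set.mem_image_of_mem v hi)
  have hzστ := And.intro (openSegment_subset_convexHull_image ha hc hz) hzτ
  exact ⟨hv _ _ (hface.2 (hvertex ha) (hvertex hc) hzστ hz).2,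
    hv _ _ (hface.2 (hvertex hc) (hvertex ha) hzστ (openSegment_symm ℝ (v a) (v c) ▸ hz)).2⟩

section Parabola

variable {m : ℕ} {t : Fin m → ℝ} {T : Finset (Finset (Fin m))} {a b c : Fin m}

theorem isEdge_of_isBot_of_isTop (ht : StrictMono t) (ha : IsBot a) (hc : IsTop c) :
    IsEdge (parabola ∘ t) T a c := by
  intro τ _ z hz hzτ
  have hne : τ.Nonempty :=
    Finset.coe_nonempty.1 (Set.image_nonempty.1 (convexHull_nonempty_iff.1 ⟨z, hzτ⟩))
  have hmin := τ.min'_mem hne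
  have hmax := τ.max'_mem hne
  obtain ⟨r, s, hr, hs, hrs, rfl⟩ := hz
  constructor
  · by_contra haτ
    have hlt : t a < t (τ.min' hne) := ht ((ha _).lt_of_ne fun h => haτ (h ▸ hmin))
    have hle := affineMap_apply_mem_of_mem_convexHull_image
      (secantDefect (t (τ.min' hne)) (t c)) (convex_Iic 0) (fun i hi => ?_) hzτ
    · simp only [Convex.combo_affine_apply hrs, secantDefect_parabola, Function.comp_apply,
        Set.mem_Iic, sub_self, mul_zero, smul_eq_mul, add_zero] at hle
      have := mul_pos_of_neg_of_neg (sub_neg.2 hlt)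
        (sub_neg.2 (hlt.trans_le (ht.monotone (hc _))))
      nlinarith
    · simpa only [Function.comp_apply, secantDefect_parabola, Set.mem_Iic] using
        mul_nonpos_of_nonneg_of_nonpos (sub_nonneg.2 (ht.monotone (τ.min'_le i hi)))
          (sub_nonpos.2 (ht.monotone (hc i)))
  · by_contra hcτ
    have hlt : t (τ.max' hne) < t c := ht ((hc _).lt_of_ne fun h => hcτ (h ▸ hmax))
    have hle := affineMap_apply_mem_of_mem_convexHull_image
      (secantDefect (t a) (t (τ.max' hne))) (convex_Iic 0) (fun i hi => ?_) hzτ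
    · simp only [Convex.combo_affine_apply hrs, secantDefect_parabola, Function.comp_apply,
        Set.mem_Iic, sub_self, zero_mul, mul_zero, smul_eq_mul, zero_add] at hle
      have := mul_pos (sub_pos.2 ((ht.monotone (ha _)).trans_lt hlt)) (sub_pos.2 hlt)
      nlinarith
    · simpa only [Function.comp_apply, secantDefect_parabola, Set.mem_Iic] using
        mul_nonpos_of_nonneg_of_nonpos (sub_nonneg.2 (ht.monotone (ha i)))
          (sub_nonpos.2 (ht.monotone (τ.le_max' i hi)))

theorem exists_mem_Ioo_of_secantDefect_neg (ht : StrictMono t) {τ : Finset (Fin m)} {z : ℝ × ℝ}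
    (hz : z ∈ convexHull ℝ (parabola ∘ t '' ↑τ)) (hac : a ≤ c)
    (hneg : secantDefect (t a) (t c) z < 0) : ∃ b ∈ τ, a < b ∧ b < c := by
  by_contra! hτ
  refine hneg.not_ge (affineMap_apply_mem_of_mem_convexHull_image (secantDefect (t a) (t c))
    (convex_Ici 0) (fun i hi => ?_) hz)
  simp only [Function.comp_apply, secantDefect_parabola, Set.mem_Ici]
  rcases le_or_gt i a with hia | hai
  · exact mul_nonneg_of_nonpos_of_nonpos (sub_nonpos.2 (ht.monotone hia))
      (sub_nonpos.2 (ht.monotone (hia.trans hac)))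
  · exact mul_nonneg (sub_nonneg.2 (ht.monotone hai.le))
      (sub_nonneg.2 (ht.monotone (hτ i hi hai)))

theorem exists_mem_inter_openSegment_nonempty {ι E : Type*} [AddCommGroup E] [Module ℝ E]
    [TopologicalSpace E] [ContinuousAdd E] [ContinuousSMul ℝ E] {S : Finset ι}
    {K : ι → Set E} (hK : ∀ i ∈ S, IsClosed (K i)) {x y : E}
    (hxy : openSegment ℝ x y ⊆ ⋃ i ∈ S, K i) :
    ∃ i ∈ S, x ∈ K i ∧ (K i ∩ openSegment ℝ x y).Nonempty := by
  have hx : x ∈ closure (⋃ i ∈ S, K i ∩ openSegment ℝ x y) := by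
    rw [← Set.iUnion₂_inter, Set.inter_eq_right.2 hxy]
    exact segment_subset_closure_openSegment (left_mem_segment ℝ x y)
  rw [Finset.closure_biUnion, Set.mem_iUnion₂] at hx
  obtain ⟨i, hi, hxi⟩ := hx
  exact ⟨i, hi, closure_minimal Set.inter_subset_left (hK i hi) hxi,
    closure_nonempty_iff.1 ⟨x, hxi⟩⟩

namespace IsTriangulation

theorem triple_eq {v : Fin m → ℝ × ℝ} (hT : IsTriangulation v T) {τ : Finset (Fin m)} (hτ : τ ∈ T)
    (hab : a < b) (hbc : b < c) (ha : a ∈ τ) (hb : b ∈ τ) (hc : c ∈ τ) : {a, b, c} = τ := by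
  refine Finset.eq_of_subset_of_card_le (by simp [Finset.insert_subset_iff, ha, hb, hc]) ?_
  rw [(hT.1 τ hτ).1, Finset.card_eq_three.2
    ⟨a, b, c, hab.ne, (hab.trans hbc).ne, hbc.ne, rfl⟩]

-- A triangle containing points arbitrarily close to the chord, on its lower side, has the chord
-- as a side and its third vertex below it.
theorem exists_triple_mem_s1 (hT : IsTriangulation (parabola ∘ t) T) (ht : StrictMono t)
    (hE : IsEdge (parabola ∘ t) T a c) {j : Fin m} (haj : a < j) (hjc : j < c) :
    ∃ b, a < b ∧ b < c ∧ {a, b, c} ∈ T := by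
  obtain ⟨z, hz⟩ : (openSegment ℝ (parabola (t a)) (parabola (t c))).Nonempty :=
    ⟨_, midpoint_mem_openSegment _ _⟩
  have hcover : openSegment ℝ z (parabola (t j)) ⊆
      ⋃ τ ∈ T, convexHull ℝ (parabola ∘ t '' ↑τ) := by
    have hzhull : z ∈ convexHull ℝ (Set.range (parabola ∘ t)) :=
      Set.image_univ (f := parabola ∘ t) ▸
        openSegment_subset_convexHull_image (v := parabola ∘ t) (Set.mem_univ a) (Set.mem_univ c) hz
    rw [hT.2.1]
    exact (convex_convexHull ℝ _).openSegment_subset hzhull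
      (subset_convexHull ℝ _ (Set.mem_range_self j))
  obtain ⟨τ, hτ, hzτ, w, hwτ, hw⟩ := exists_mem_inter_openSegment_nonempty
    (fun τ _ => (τ.finite_toSet.image _).isClosed_convexHull ℝ) hcover
  obtain ⟨ha, hc⟩ := hE τ hτ z hz hzτ
  have hneg : secantDefect (t a) (t c) w < 0 := by
    obtain ⟨r, s, -, hs, hrs, rfl⟩ := hw
    rw [Convex.combo_affine_apply hrs, secantDefect_eq_zero_of_mem_openSegment hz, smul_zero,
      zero_add, secantDefect_parabola]
    exact mul_neg_of_pos_of_neg hs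
      (mul_neg_of_pos_of_neg (sub_pos.2 (ht haj)) (sub_neg.2 (ht hjc)))
  obtain ⟨b, hb, hab, hbc⟩ := exists_mem_Ioo_of_secantDefect_neg ht hwτ (haj.trans hjc).le hneg
  exact ⟨b, hab, hbc, hT.triple_eq hτ hab hbc ha hb hc ▸ hτ⟩

theorem not_crossing (hT : IsTriangulation (parabola ∘ t) T) (ht : StrictMono t)
    {σ τ : Finset (Fin m)} (hσ : σ ∈ T) (hτ : τ ∈ T) {d : Fin m} (ha : a ∈ σ) (hc : c ∈ σ)
    (hb : b ∈ τ) (hd : d ∈ τ) (hab : a < b) (hbc : b < c) : ¬ c < d := by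
  intro hcd
  obtain ⟨z, hzac, hzbd⟩ := openSegment_parabola_inter_nonempty (ht hab) (ht hbc) (ht hcd)
  obtain ⟨haτ, hcτ⟩ := hT.isEdge (convexIndependent_parabola ht.injective) hσ ha hc τ hτ z hzac
    (openSegment_subset_convexHull_image (v := parabola ∘ t) hb hd hzbd)
  have hdabc : d ∈ ({a, b, c} : Finset (Fin m)) := hT.triple_eq hτ hab hbc haτ hb hcτ ▸ hd
  simp [hcd.ne', (hbc.trans hcd).ne', (hab.trans (hbc.trans hcd)).ne'] at hdabc

theorem subset_Icc_iff_of_triple_mem (hT : IsTriangulation (parabola ∘ t) T) (ht : StrictMono t)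
    (hab : a < b) (hbc : b < c) (habc : {a, b, c} ∈ T) {σ : Finset (Fin m)} (hσ : σ ∈ T) :
    σ ⊆ Finset.Icc a c ↔ σ = {a, b, c} ∨ σ ⊆ Finset.Icc a b ∨ σ ⊆ Finset.Icc b c := by
  constructor
  · intro hac
    by_contra! ⟨hne, hleft, hright⟩
    have hIcc {i : Fin m} (hi : i ∈ σ) := Finset.mem_Icc.1 (hac hi)
    obtain ⟨y, hy, hby⟩ : ∃ y ∈ σ, b < y := by
      by_contra! h
      exact hleft fun i hi => Finset.mem_Icc.2 ⟨(hIcc hi).1, h i hi⟩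
    obtain ⟨x, hx, hxb⟩ : ∃ x ∈ σ, x < b := by
      by_contra! h
      exact hright fun i hi => Finset.mem_Icc.2 ⟨h i hi, (hIcc hi).2⟩
    have hsub : σ ⊆ {a, b, c} := by
      intro i hi
      rcases lt_trichotomy i b with hib | rfl | hbi
      · have hai : ¬ a < i := fun hai =>
          hT.not_crossing ht habc hσ (by simp) (by simp) hi hy hai hib hby
        simp [((hIcc hi).1.eq_of_not_lt hai).symm]
      · simp
      · have hic : ¬ i < c :=
          hT.not_crossing ht hσ habc hx hi (by simp) (by simp) hxb hbi
        simp [(hIcc hi).2.eq_of_not_lt hic]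
    exact hne (Finset.eq_of_subset_of_card_le hsub
      ((hT.1 σ hσ).1 ▸ Finset.card_le_three))
  · rintro (rfl | h | h)
    · simp [Finset.insert_subset_iff, hab.le, hbc.le, (hab.trans hbc).le]
    · exact h.trans (Finset.Icc_subset_Icc_right hbc.le)
    · exact h.trans (Finset.Icc_subset_Icc_left hab.le)

end IsTriangulation

end Parabola

/-! ### GKZ weights -/

/-- The coefficients of the GKZ vector: the total area of the triangles of `T` at each vertex. -/
noncomputable def gkzWeight {m : ℕ} (v : Fin m → ℝ × ℝ) (T : Finset (Finset (Fin m))) (i : Fin m) :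
    ℝ :=
  ∑ σ ∈ T with i ∈ σ, triArea v σ

section GKZWeight

variable {m : ℕ}

theorem gkzWeight_union (v : Fin m → ℝ × ℝ) {S T : Finset (Finset (Fin m))}
    (hST : Disjoint S T) : gkzWeight v (S ∪ T) = gkzWeight v S + gkzWeight v T := by
  funext i
  rw [Pi.add_apply, gkzWeight, Finset.filter_union, Finset.sum_union]
  · rfl
  · exact Finset.disjoint_filter_filter hST

theorem gkzWeight_singleton_triple (v : Fin m → ℝ × ℝ) {a b c : Fin m} (hab : a ≠ b)
    (hac : a ≠ c) (hbc : b ≠ c) :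
    gkzWeight v {{a, b, c}} =
      Pi.single a (triArea v {a, b, c}) + Pi.single b (triArea v {a, b, c}) +
        Pi.single c (triArea v {a, b, c}) := by
  funext i
  simp only [gkzWeight, Finset.sum_filter, Finset.sum_singleton, Finset.mem_insert,
    Finset.mem_singleton, Pi.add_apply, Pi.single_apply]
  grind

variable {t : Fin m → ℝ} {T : Finset (Finset (Fin m))} {a b c : Fin m}

theorem IsTriangulation.gkzWeight_filter_subset_Icc
    (hT : IsTriangulation (parabola ∘ t) T) (ht : StrictMono t)
    (hab : a < b) (hbc : b < c) (habc : {a, b, c} ∈ T) :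
    gkzWeight (parabola ∘ t) {σ ∈ T | σ ⊆ Finset.Icc a c} =
      gkzWeight (parabola ∘ t) {{a, b, c}} +
        (gkzWeight (parabola ∘ t) {σ ∈ T | σ ⊆ Finset.Icc a b} +
          gkzWeight (parabola ∘ t) {σ ∈ T | σ ⊆ Finset.Icc b c}) := by
  have hfilter : {σ ∈ T | σ ⊆ Finset.Icc a c} =
      {{a, b, c}} ∪ ({σ ∈ T | σ ⊆ Finset.Icc a b} ∪ {σ ∈ T | σ ⊆ Finset.Icc b c}) := by
    ext σ
    have := hT.subset_Icc_iff_of_triple_mem ht hab hbc habc (σ := σ)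
    simp only [Finset.mem_filter, Finset.mem_union, Finset.mem_singleton]
    grind
  have hsides : Disjoint {σ ∈ T | σ ⊆ Finset.Icc a b} {σ ∈ T | σ ⊆ Finset.Icc b c} := by
    refine Finset.disjoint_filter.2 fun σ hσ hleft hright => ?_
    have hσb : σ ⊆ {b} := fun i hi => Finset.mem_singleton.2 <|
      (Finset.mem_Icc.1 (hleft hi)).2.antisymm (Finset.mem_Icc.1 (hright hi)).1
    have := Finset.card_le_card hσb
    rw [(hT.1 σ hσ).1, Finset.card_singleton] at this
    omega
  have hapex : Disjoint {{a, b, c}}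
      ({σ ∈ T | σ ⊆ Finset.Icc a b} ∪ {σ ∈ T | σ ⊆ Finset.Icc b c}) := by
    simp [Finset.disjoint_singleton_left, Finset.insert_subset_iff, hab.not_ge, hbc.not_ge]
  rw [hfilter, gkzWeight_union _ hapex, gkzWeight_union _ hsides]

theorem IsTriangulation.filter_subset_Icc_eq_empty {v : Fin m → ℝ × ℝ}
    (hT : IsTriangulation v T) (hac : (c : ℕ) ≤ a + 1) :
    {σ ∈ T | σ ⊆ Finset.Icc a c} = ∅ := by
  refine Finset.filter_eq_empty_iff.2 fun σ hσ hsub => ?_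
  have := Finset.card_le_card hsub
  rw [(hT.1 σ hσ).1, Fin.card_Icc] at this
  omega

end GKZWeight

/-! ### Total mass, first moment and energy of a weight -/

section Moments

variable {ι : Type*} [Fintype ι]

/-- The zeroth moment of the weight `φ`. -/
def totalMass (φ : ι → ℝ) : ℝ := ∑ i, φ i

/-- The first moment of the weight `φ` placed at the points `t i` of the line. -/
def firstMoment (t φ : ι → ℝ) : ℝ := ∑ i, φ i * t i

/-- The self-energy of the weight `φ`, placed at the points `t i` of the line, for the kernel
`|x - y|`. -/
def selfEnergy (t φ : ι → ℝ) : ℝ := ∑ i, ∑ j, φ i * φ j * |t i - t j|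

theorem totalMass_add (φ ψ : ι → ℝ) : totalMass (φ + ψ) = totalMass φ + totalMass ψ := by
  simp only [totalMass, Pi.add_apply, Finset.sum_add_distrib]

theorem firstMoment_add (t φ ψ : ι → ℝ) :
    firstMoment t (φ + ψ) = firstMoment t φ + firstMoment t ψ := by
  simp only [firstMoment, Pi.add_apply, add_mul, Finset.sum_add_distrib]

theorem totalMass_single [DecidableEq ι] (i : ι) (V : ℝ) : totalMass (Pi.single i V) = V := by
  simp [totalMass]

theorem firstMoment_single [DecidableEq ι] (t : ι → ℝ) (i : ι) (V : ℝ) :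
    firstMoment t (Pi.single i V) = V * t i := by
  simp [firstMoment, Pi.single_apply]

theorem selfEnergy_single [DecidableEq ι] (t : ι → ℝ) (i : ι) (V : ℝ) :
    selfEnergy t (Pi.single i V) = 0 := by
  simp [selfEnergy, Pi.single_apply]

theorem norm_sum_smul_sq {E : Type*} [NormedAddCommGroup E] [InnerProductSpace ℝ E]
    {f : ι → E} {t : ι → ℝ} {α β γ : ℝ}
    (hf : ∀ i j, inner ℝ (f i) (f j) = α + β * (t i + t j) + γ * |t i - t j|) (φ : ι → ℝ) :
    ‖∑ i, φ i • f i‖ ^ 2 =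
      α * totalMass φ ^ 2 + 2 * β * totalMass φ * firstMoment t φ + γ * selfEnergy t φ := by
  have hsymm : 2 * β * totalMass φ * firstMoment t φ =
      β * (totalMass φ * firstMoment t φ + firstMoment t φ * totalMass φ) := by ring
  rw [← real_inner_self_eq_norm_sq, hsymm]
  simp only [sum_inner, inner_sum, real_inner_smul_left, real_inner_smul_right, hf, totalMass,
    firstMoment, selfEnergy, sq, Finset.sum_mul_sum]
  simp only [← Finset.sum_add_distrib, Finset.mul_sum]
  refine Finset.sum_congr rfl fun i _ => Finset.sum_congr rfl fun j _ => ?_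
  rw [abs_sub_comm (t i)]
  ring

variable [LinearOrder ι] {t : ι → ℝ}

theorem selfEnergy_add (ht : Monotone t) {φ ψ : ι → ℝ} {b : ι}
    (hφ : φ.support ⊆ Set.Iic b) (hψ : ψ.support ⊆ Set.Ici b) :
    selfEnergy t (φ + ψ) = selfEnergy t φ + selfEnergy t ψ +
      2 * (totalMass φ * firstMoment t ψ - firstMoment t φ * totalMass ψ) := by
  have hcross : ∑ i, ∑ j, φ i * ψ j * |t i - t j| =
      totalMass φ * firstMoment t ψ - firstMoment t φ * totalMass ψ := by
    simp only [totalMass, firstMoment, Finset.sum_mul_sum, ← Finset.sum_sub_distrib]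
    refine Finset.sum_congr rfl fun i _ => Finset.sum_congr rfl fun j _ => ?_
    by_cases hi : φ i = 0
    · simp [hi]
    by_cases hj : ψ j = 0
    · simp [hj]
    have hij : t i ≤ t j := ht ((hφ hi).trans (hψ hj))
    rw [abs_of_nonpos (sub_nonpos.2 hij)]
    ring
  have hcross' : ∑ i, ∑ j, ψ i * φ j * |t i - t j| = ∑ i, ∑ j, φ i * ψ j * |t i - t j| := by
    rw [Finset.sum_comm]
    simp only [abs_sub_comm, mul_comm]
  rw [two_mul, ← hcross]
  nth_rw 2 [← hcross']
  simp only [selfEnergy, Pi.add_apply, ← Finset.sum_add_distrib]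
  refine Finset.sum_congr rfl fun i _ => Finset.sum_congr rfl fun j _ => ?_
  ring

/-- The weight `φ` lives on the vertices between `a` and `c`, and its invariants are those of the
GKZ weights of the polygon inscribed in the parabola at abscissas `t a, t a + h, …, t c`, where
`κ` is the area of a triangle inscribed in the parabola divided by the product of the differences of
its abscissas. The right-hand sides are the solution of the recursion in
`HasPolygonMoments.glue` that vanishes for `t c - t a = h`. -/
structure HasPolygonMoments (h κ : ℝ) (t : ι → ℝ) (a c : ι) (φ : ι → ℝ) : Prop where
  support_subset : φ.support ⊆ Set.Icc a c
  totalMass_eq : totalMass φ = κ * ((t c - t a) ^ 3 - h ^ 2 * (t c - t a))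
  firstMoment_eq : firstMoment t φ =
    κ * ((t c - t a) ^ 3 - h ^ 2 * (t c - t a)) * ((t a + t c) / 2)
  selfEnergy_eq : selfEnergy t φ =
    κ ^ 2 * (45 * (t c - t a) ^ 7 - 84 * h ^ 2 * (t c - t a) ^ 5 +
      35 * h ^ 4 * (t c - t a) ^ 3 + 4 * h ^ 6 * (t c - t a)) / 105

namespace HasPolygonMoments

variable {h κ : ℝ} {a b c : ι}

theorem zero (h κ : ℝ) (hac : t c - t a = 0 ∨ t c - t a = h) :
    HasPolygonMoments h κ t a c 0 := by
  constructor
  · simp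
  all_goals
    simp only [totalMass, firstMoment, selfEnergy, Pi.zero_apply, zero_mul, Finset.sum_const_zero]
    rcases hac with hac | hac <;> rw [hac] <;> ring

theorem glue (ht : Monotone t) (hab : a ≤ b) (hbc : b ≤ c) {φ ψ : ι → ℝ}
    (hφ : HasPolygonMoments h κ t a b φ) (hψ : HasPolygonMoments h κ t b c ψ) {V : ℝ}
    (hV : V = κ * ((t b - t a) * (t c - t b) * (t c - t a))) :
    HasPolygonMoments h κ t a c
      (Pi.single a V + φ + Pi.single b V + ψ + Pi.single c V) := by
  have hsingle (i : ι) : (Pi.single i V : ι → ℝ).support ⊆ {i} := Pi.support_single_subset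
  have support_add {φ ψ : ι → ℝ} {s : Set ι} (hφ : φ.support ⊆ s) (hψ : ψ.support ⊆ s) :
      (φ + ψ).support ⊆ s := (Function.support_add φ ψ).trans (Set.union_subset hφ hψ)
  have hφb : (Pi.single a V + φ).support ⊆ Set.Iic b :=
    support_add ((hsingle a).trans (by simpa)) (hφ.support_subset.trans Set.Icc_subset_Iic_self)
  have hbb : (Pi.single a V + φ + Pi.single b V).support ⊆ Set.Iic b :=
    support_add hφb ((hsingle b).trans (by simp))
  have hψc : (Pi.single a V + φ + Pi.single b V + ψ).support ⊆ Set.Iic c :=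
    support_add (hbb.trans (Set.Iic_subset_Iic.2 hbc))
      (hψ.support_subset.trans Set.Icc_subset_Iic_self)
  constructor
  · refine support_add (support_add (support_add (support_add ?_ ?_) ?_) ?_) ?_
    · exact (hsingle a).trans (by simp [hab.trans hbc])
    · exact hφ.support_subset.trans (Set.Icc_subset_Icc_right hbc)
    · exact (hsingle b).trans (by simp [hab, hbc])
    · exact hψ.support_subset.trans (Set.Icc_subset_Icc_left hab)
    · exact (hsingle c).trans (by simp [hab.trans hbc])
  · simp only [totalMass_add, totalMass_single, hφ.totalMass_eq, hψ.totalMass_eq, hV]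
    ring
  · simp only [firstMoment_add, firstMoment_single, hφ.firstMoment_eq, hψ.firstMoment_eq, hV]
    ring
  · rw [selfEnergy_add ht hψc ((hsingle c).trans (by simp)),
      selfEnergy_add ht hbb (hψ.support_subset.trans Set.Icc_subset_Ici_self),
      selfEnergy_add ht hφb ((hsingle b).trans (by simp)),
      selfEnergy_add ht ((hsingle a).trans (by simp))
        (hφ.support_subset.trans Set.Icc_subset_Ici_self)]
    simp only [totalMass_add, firstMoment_add, totalMass_single, firstMoment_single,
      selfEnergy_single, hφ.totalMass_eq, hφ.firstMoment_eq, hφ.selfEnergy_eq, hψ.totalMass_eq,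
      hψ.firstMoment_eq, hψ.selfEnergy_eq, hV]
    ring

end HasPolygonMoments

end Moments

/-! ### Equally spaced points -/

theorem strictMono_of_forall_eq_add_mul {m : ℕ} {t : Fin m → ℝ} {x h : ℝ} (hh : 0 < h)
    (ht : ∀ i : Fin m, t i = x + h * (i : ℕ)) : StrictMono t := fun i j hij => by
  simpa only [ht, add_lt_add_iff_left, mul_lt_mul_iff_right₀ hh, Nat.cast_lt, Fin.val_fin_lt]
    using hij

theorem IsTriangulation.hasPolygonMoments {m : ℕ} {t : Fin m → ℝ} {x h : ℝ} (hh : 0 < h)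
    (ht : ∀ i : Fin m, t i = x + h * (i : ℕ)) {T : Finset (Finset (Fin m))}
    (hT : IsTriangulation (parabola ∘ t) T) {a c : Fin m} (hac : a ≤ c)
    (hE : IsEdge (parabola ∘ t) T a c) :
    HasPolygonMoments h unitTriangleArea t a c
      (gkzWeight (parabola ∘ t) {σ ∈ T | σ ⊆ Finset.Icc a c}) := by
  have hmono := strictMono_of_forall_eq_add_mul hh ht
  induction hn : (c : ℕ) - a using Nat.strong_induction_on generalizing a c with
  | _ n ih =>
    by_cases hbetween : ∃ j, a < j ∧ j < c
    · obtain ⟨j, haj, hjc⟩ := hbetween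
      obtain ⟨b, hab, hbc, habc⟩ := hT.exists_triple_mem_s1 hmono hE haj hjc
      have hside {i k : Fin m} (hi : i ∈ ({a, b, c} : Finset (Fin m)))
          (hk : k ∈ ({a, b, c} : Finset (Fin m))) : IsEdge (parabola ∘ t) T i k :=
        hT.isEdge (convexIndependent_parabola hmono.injective) habc hi hk
      have hleft := ih (b - a) (by omega) hab.le (hside (by simp) (by simp)) rfl
      have hright := ih (c - b) (by omega) hbc.le (hside (by simp) (by simp)) rfl
      have hglue := hleft.glue hmono.monotone hab.le hbc.le hright
        (triArea_parabola hmono.monotone hab.le hbc.le)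
      rw [hT.gkzWeight_filter_subset_Icc hmono hab hbc habc,
        gkzWeight_singleton_triple _ hab.ne (hab.trans hbc).ne hbc.ne]
      convert hglue using 1
      abel
    · have hca : (c : ℕ) ≤ a + 1 := by
        by_contra! hlt
        exact hbetween ⟨⟨a + 1, by omega⟩, Nat.lt_succ_self a, hlt⟩
      have hgap : t c - t a = 0 ∨ t c - t a = h := by
        obtain heq | heq : (c : ℕ) = a ∨ (c : ℕ) = a + 1 := by omega
        · simp [ht, heq]
        · right
          rw [ht, ht, heq]
          push_cast
          ring
      rw [hT.filter_subset_Icc_eq_empty hca]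
      convert HasPolygonMoments.zero h unitTriangleArea hgap using 1
      funext i
      simp [gkzWeight]

theorem inner_sum_single_Iic {m : ℕ} (i j : Fin m) :
    inner ℝ (∑ k ∈ Finset.Iic i, EuclideanSpace.single k (1 : ℝ))
      (∑ k ∈ Finset.Iic j, EuclideanSpace.single k (1 : ℝ)) =
        1 + 1 / 2 * (((i : ℕ) : ℝ) + (j : ℕ)) + -1 / 2 * |((i : ℕ) : ℝ) - (j : ℕ)| := by
  have hcard : inner ℝ (∑ k ∈ Finset.Iic i, EuclideanSpace.single k (1 : ℝ))
      (∑ k ∈ Finset.Iic j, EuclideanSpace.single k (1 : ℝ)) =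
        ((Finset.Iic j ∩ Finset.Iic i).card : ℝ) := by
    simp only [sum_inner, inner_sum, EuclideanSpace.inner_single_left, map_one, one_mul,
      PiLp.single_apply, Finset.sum_ite_eq', Finset.sum_boole]
    simp [← Finset.filter_mem_eq_inter]
  have hinter : Finset.Iic j ∩ Finset.Iic i = Finset.Iic (min i j) := by
    ext
    simp [and_comm]
  have hmin : min ((i : ℕ) : ℝ) (j : ℕ) =
      (((i : ℕ) : ℝ) + (j : ℕ) - |((i : ℕ) : ℝ) - (j : ℕ)|) / 2 := by
    grind
  rw [hcard, hinter, Fin.card_Iic, Fin.coe_min, Nat.cast_add, Nat.cast_min, hmin, Nat.cast_one]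
  ring

theorem gkz_norm_eq_of_parabola_general {m : ℕ} {E : Type*} [NormedAddCommGroup E]
    [InnerProductSpace ℝ E] {x h α β γ : ℝ} (hh : 0 < h) {t : Fin m → ℝ}
    (ht : ∀ i : Fin m, t i = x + h * (i : ℕ)) {v : Fin m → ℝ × ℝ}
    (hv : ∀ i, v i = (t i, t i ^ 2)) {f : Fin m → E}
    (hf : ∀ i j, inner ℝ (f i) (f j) = α + β * (t i + t j) + γ * |t i - t j|)
    {T T' : Finset (Finset (Fin m))} (hT : IsTriangulation v T) (hT' : IsTriangulation v T') :
    ‖GKZ v f T‖ = ‖GKZ v f T'‖ := by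
  obtain rfl : v = parabola ∘ t := funext hv
  rcases m with - | n
  · simp [GKZ]
  have hmono := strictMono_of_forall_eq_add_mul hh ht
  have hmoments {S : Finset (Finset (Fin (n + 1)))} (hS : IsTriangulation (parabola ∘ t) S) :
      HasPolygonMoments h unitTriangleArea t 0 (Fin.last n) (gkzWeight (parabola ∘ t) S) := by
    have hIcc : {σ ∈ S | σ ⊆ Finset.Icc 0 (Fin.last n)} = S := by
      simp [Finset.subset_iff, Fin.le_last]
    simpa only [hIcc] using hS.hasPolygonMoments hh ht (Fin.zero_le _)
      (isEdge_of_isBot_of_isTop hmono Fin.zero_le Fin.le_last)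
  have hsq : ‖GKZ (parabola ∘ t) f T‖ ^ 2 = ‖GKZ (parabola ∘ t) f T'‖ ^ 2 := by
    change ‖∑ i, gkzWeight _ T i • f i‖ ^ 2 = ‖∑ i, gkzWeight _ T' i • f i‖ ^ 2
    rw [norm_sum_smul_sq hf, norm_sum_smul_sq hf, (hmoments hT).totalMass_eq,
      (hmoments hT).firstMoment_eq, (hmoments hT).selfEnergy_eq, (hmoments hT').totalMass_eq,
      (hmoments hT').firstMoment_eq, (hmoments hT').selfEnergy_eq]
  exact (sq_eq_sq₀ (norm_nonneg _) (norm_nonneg _)).1 hsq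

/-- All GKZ vectors of triangulations of the points `(i, i²)`, `i = 0, …, n+2`,
on the standard parabola, with respect to the partial sums of the standard
basis vectors, have the same Euclidean norm. -/
theorem gkz_norm_eq_of_parabola (n : ℕ)
    (v : Fin (n + 3) → ℝ × ℝ)
    (hv : ∀ i : Fin (n + 3), v i = (((i : ℕ) : ℝ), ((i : ℕ) : ℝ) ^ 2))
    (f : Fin (n + 3) → EuclideanSpace ℝ (Fin (n + 3)))
    (hf : ∀ i, f i = ∑ j ∈ Finset.Iic i, EuclideanSpace.single j (1 : ℝ))
    (T T' : Finset (Finset (Fin (n + 3))))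
    (hT : IsTriangulation v T) (hT' : IsTriangulation v T') :
    ‖GKZ v f T‖ = ‖GKZ v f T'‖ := by
  have hgram i j := (congrArg₂ (inner ℝ) (hf i) (hf j)).trans (inner_sum_single_Iic i j)
  exact gkz_norm_eq_of_parabola_general one_pos (x := 0) (by simp) hv hgram hT hT'
end
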